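/- Let π ∈ S_n and let S be a 1-subgraph of the inversion graph G_π. If S is horizontally separated (HS), i.e., for any two distinct edges (j,i) and (j',i') of S (with j < i and j' < i') either i < j' or i' < j, then S is valid. Consequently, |Fib_n(π)| ≥ |{S ∈ Sub(π) : S is HS}|. -/

import Mathlib

/- Common definitions: the classical and MVP parking processes, parking
functions, inversion graphs and 1-subgraphs, Motzkin paths, and sandpile
configurations on complete graphs. Spots, cars and vertices are 0-indexed
(element `i : Fin n` corresponds to the 1-indexed `i+1` of the paper). -/

namespace MVPPaper

open Finset

variable {n : ℕ}

/-- The first unoccupied spot `k ≥ s` in the occupancy `occ`, if any exists.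
`occ k = some i` means spot `k` is occupied by car `i`. -/
def firstFree (occ : Fin n → Option (Fin n)) (s : Fin n) : Option (Fin n) :=
  (List.finRange n).find? fun k => decide (s ≤ k) && (occ k).isNone

/-- One step of the classical parking process: car `i`, preferring spot `s`,
parks in the first free spot `k ≥ s` (failure if none exists). -/
def classicalStep (occ : Fin n → Option (Fin n)) (i s : Fin n) :
    Option (Fin n → Option (Fin n)) :=
  (firstFree occ s).map fun k => Function.update occ k (some i)

/-- One step of the MVP parking process: car `i` parks in its preferred spot
`s`; if `s` was occupied by an earlier car `j`, then `j` is bumped out and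
drives on to the first free spot `k ≥ s` (failure if none exists). -/
def mvpStep (occ : Fin n → Option (Fin n)) (i s : Fin n) :
    Option (Fin n → Option (Fin n)) :=
  match occ s with
  | none => some (Function.update occ s (some i))
  | some j =>
      (firstFree (Function.update occ s (some i)) s).map fun k =>
        Function.update (Function.update occ s (some i)) k (some j)

/-- Run a parking process: cars `0, 1, …, n-1` enter in order, with car `i`
preferring spot `p i`. Returns the final occupancy, or `none` on failure. -/
def runProcess
    (step : (Fin n → Option (Fin n)) → Fin n → Fin n → Option (Fin n → Option (Fin n)))
    (p : Fin n → Fin n) : Option (Fin n → Option (Fin n)) :=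
  List.foldlM (fun occ i => step occ i (p i)) (fun _ => none) (List.finRange n)

def mvpRun (p : Fin n → Fin n) : Option (Fin n → Option (Fin n)) :=
  runProcess mvpStep p

def classicalRun (p : Fin n → Fin n) : Option (Fin n → Option (Fin n)) :=
  runProcess classicalStep p

/-- All cars park successfully under the MVP process. -/
def IsMVPParking (p : Fin n → Fin n) : Prop := (mvpRun p).isSome

/-- All cars park successfully under the classical process. -/
def IsClassicalParking (p : Fin n → Fin n) : Prop := (classicalRun p).isSome

/-- `MVPOutcome p π` means that the MVP parking process for `p` succeeds, and
car `π i` finally occupies spot `i` for all `i`; that is, `O_MVP(p) = π`. -/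
def MVPOutcome (p : Fin n → Fin n) (π : Equiv.Perm (Fin n)) : Prop :=
  ∃ occ, mvpRun p = some occ ∧ ∀ i, occ i = some (π i)

/-- `p` is a parking function: for every `k`, at least `k+1` cars prefer a spot
`≤ k` (the classical counting characterisation, 0-indexed). -/
def IsParkingFunction (p : Fin n → Fin n) : Prop :=
  ∀ k : Fin n, (k : ℕ) + 1 ≤ (univ.filter fun i => p i ≤ k).card

/-- The fibre of the MVP outcome map over `π`: parking functions with MVP
outcome `π`. -/
def FibMVP (π : Equiv.Perm (Fin n)) : Set (Fin n → Fin n) :=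
  {p | IsParkingFunction p ∧ MVPOutcome p π}

/-- The set of inversions of `π` (where `π i` is the car occupying spot `i`):
pairs `(j, i)` with `j < i` and `π j > π i`. These are the edges of the
inversion graph `G_π`. -/
def invFinset (π : Equiv.Perm (Fin n)) : Finset (Fin n × Fin n) :=
  univ.filter fun e => e.1 < e.2 ∧ π e.2 < π e.1

/-- The left-inversions of `π` at `i`. -/
def lInv (π : Equiv.Perm (Fin n)) (i : Fin n) : Finset (Fin n) :=
  univ.filter fun j => j < i ∧ π i < π j

/-- A 1-subgraph of the inversion graph of `π`: a set of inversions with at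
most one incident left-arc at each vertex. -/
def IsOneSubgraph (π : Equiv.Perm (Fin n)) (S : Finset (Fin n × Fin n)) : Prop :=
  S ⊆ invFinset π ∧ ∀ i j j' : Fin n, (j, i) ∈ S → (j', i) ∈ S → j = j'

/-- The map `Ψ_{Sub→PF}`: the parking preference `p` where `p (π i) = j` if
`(j, i) ∈ S` (for the unique such `j`), and `p (π i) = i` otherwise. -/
noncomputable def subToPF (π : Equiv.Perm (Fin n)) (S : Finset (Fin n × Fin n)) :
    Fin n → Fin n := fun c =>
  if h : ∃ j, (j, π.symm c) ∈ S then h.choose else π.symm c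

/-- The map `Ψ_{PF→Sub}`: the set of inversions `(j, i)` of `π` with
`p (π i) = j`. -/
def pfToSub (π : Equiv.Perm (Fin n)) (p : Fin n → Fin n) : Finset (Fin n × Fin n) :=
  (invFinset π).filter fun e => p (π e.2) = e.1

/-- A 1-subgraph `S` is valid if the MVP outcome of `Ψ_{Sub→PF}(S)` is `π`. -/
def IsValid (π : Equiv.Perm (Fin n)) (S : Finset (Fin n × Fin n)) : Prop :=
  MVPOutcome (subToPF π S) π

/-- `π` contains the pattern `321`. -/
def Contains321 (π : Equiv.Perm (Fin n)) : Prop :=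
  ∃ i j k : Fin n, i < j ∧ j < k ∧ π k < π j ∧ π j < π i

/-- `π` contains the pattern `3412`. -/
def Contains3412 (π : Equiv.Perm (Fin n)) : Prop :=
  ∃ i j k l : Fin n, i < j ∧ j < k ∧ k < l ∧ π k < π l ∧ π l < π i ∧ π i < π j

/-- `S` is `P⃗₂`-free: there is no triple `i < j < k` with `(i,j) ∈ S` and
`(j,k) ∈ S`. -/
def P2Free (S : Finset (Fin n × Fin n)) : Prop :=
  ¬∃ i j k : Fin n, i < j ∧ j < k ∧ (i, j) ∈ S ∧ (j, k) ∈ S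

/-- `S` is horizontally separated (HS): any two distinct edges `(j,i)` and
`(j',i')` of `S` satisfy `i < j'` or `i' < j`. -/
def IsHS (S : Finset (Fin n × Fin n)) : Prop :=
  ∀ e ∈ S, ∀ e' ∈ S, e ≠ e' → e.2 < e'.1 ∨ e'.2 < e.1

/-- Steps of a Motzkin path: up, horizontal, down. -/
inductive MStep : Type
  | U : MStep
  | H : MStep
  | D : MStep
  deriving DecidableEq

/-- The height change of a step. -/
def stepVal : MStep → ℤ
  | MStep.U => 1
  | MStep.H => 0
  | MStep.D => -1

/-- The number of cars preferring spot `j` in `p`. -/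
def prefCount (p : Fin n → Fin n) (j : Fin n) : ℕ :=
  (univ.filter fun i => p i = j).card

/-- The lattice path `Φ(p)`: step `j` is `U`, `H` or `D` according to whether
spot `j` is preferred by at least two, exactly one, or no cars. -/
def Phi (p : Fin n → Fin n) : Fin n → MStep := fun j =>
  if 2 ≤ prefCount p j then MStep.U
  else if prefCount p j = 1 then MStep.H
  else MStep.D

/-- An `n`-step lattice path is a Motzkin path: it ends at height `0` and no
prefix goes below height `0`. -/
def IsMotzkinPath (φ : Fin n → MStep) : Prop :=
  (∑ j : Fin n, stepVal (φ j)) = 0 ∧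
  ∀ k : Fin n, 0 ≤ ∑ j ∈ univ.filter (fun j : Fin n => j ≤ k), stepVal (φ j)

/-- The decreasing permutation `dec_n = n(n-1)⋯1`: spot `i` gets car `n-1-i`
(0-indexed). -/
def decPerm (n : ℕ) : Equiv.Perm (Fin n) :=
  ⟨Fin.rev, Fin.rev, Fin.rev_rev, Fin.rev_rev⟩

/-- A non-crossing matching arc diagram on `{0, …, n-1}`: arcs go left to
right, each vertex is incident to at most one arc, and no two arcs cross. -/
def IsNonCrossMatching (S : Finset (Fin n × Fin n)) : Prop :=
  (∀ e ∈ S, e.1 < e.2) ∧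
  (∀ e ∈ S, ∀ e' ∈ S, e ≠ e' →
    e.1 ≠ e'.1 ∧ e.1 ≠ e'.2 ∧ e.2 ≠ e'.1 ∧ e.2 ≠ e'.2) ∧
  ¬∃ i j k l : Fin n, i < j ∧ j < k ∧ k < l ∧ (i, k) ∈ S ∧ (j, l) ∈ S

/-- A stable configuration `c` (grain counts, each `< n`) on the complete graph
`K_n` is recurrent; by Dhar's burning criterion this amounts on `K_n` to the
existence of an ordering `v` of the vertices with `c (v k) ≥ n - (k+1)` for
every `k` (0-indexed). -/
def IsRecurrentK (c : Fin n → ℕ) : Prop :=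
  (∀ i, c i < n) ∧ ∃ v : Equiv.Perm (Fin n), ∀ k : Fin n, n ≤ c (v k) + (k : ℕ) + 1

/-! Each car has an explicit position at every time. Let `p` be the preference of an HS 1-subgraph
and let car `π i` have entered. It is parked at the first spot `s ≥ p (π i)` which is either its
final spot `i` or whose final occupant `π s` has not yet entered: whenever the final occupant of its
current spot enters, it is bumped, and on its way to the next such spot it meets only cars that are
already home, because horizontal separation keeps the cars of all other edges outside
`[p (π i), i]`. Once every car has entered, every car is home. -/

lemma isLeast_sdiff_singleton_iff {α : Type*} [LinearOrder α] {A : Set α} {a b : α}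
    (ha : ¬ IsLeast A a) : IsLeast (A \ {a}) b ↔ IsLeast A b := by
  constructor
  · rintro ⟨⟨hbA, hba⟩, hb⟩
    refine ⟨hbA, fun x hx => ?_⟩
    obtain rfl | hxa := eq_or_ne x a
    · by_contra! hxb
      refine ha ⟨hx, fun y hy => ?_⟩
      obtain rfl | hyx := eq_or_ne y x
      · exact le_rfl
      · exact hxb.le.trans (hb ⟨hy, hyx⟩)
    · exact hb ⟨hx, hxa⟩
  · intro hb
    exact ⟨⟨hb.1, fun hba => ha (hba ▸ hb)⟩, fun x hx => hb.2 hx.1⟩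

lemma exists_foldlM_finRange_eq_some {α : Type*} {f : α → Fin n → Option α} {a : α}
    (P : ℕ → α → Prop) (zero : P 0 a)
    (succ : ∀ (c : Fin n) (b : α), P c b → ∃ b', f b c = some b' ∧ P (c + 1) b') :
    ∃ b, (List.finRange n).foldlM f a = some b ∧ P n b := by
  induction n with
  | zero => exact ⟨a, by simp, zero⟩
  | succ n ih =>
    obtain ⟨b, hrun, hb⟩ := ih (f := fun b c => f b c.castSucc) fun c => succ c.castSucc
    obtain ⟨b', hstep, hb'⟩ := succ (Fin.last n) b hb
    refine ⟨b', ?_, hb'⟩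
    rw [List.finRange_succ_last, List.foldlM_append, List.foldlM_map, hrun]
    simpa using hstep

lemma firstFree_eq_some_of_isLeast {occ : Fin n → Option (Fin n)} {s m : Fin n}
    (hm : IsLeast {u | s ≤ u ∧ occ u = none} m) : firstFree occ s = some m := by
  rw [firstFree, List.find?_eq_some_iff_getElem]
  refine ⟨by simp [hm.1.1, hm.1.2], m, by simp, by simp, fun u hu => ?_⟩
  have hlt : (⟨u, hu.trans m.isLt⟩ : Fin n) < m := hu
  have hnot_free : s ≤ ⟨u, hu.trans m.isLt⟩ → occ ⟨u, hu.trans m.isLt⟩ ≠ none :=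
    fun hs hocc => hlt.not_ge (hm.2 ⟨hs, hocc⟩)
  simpa [Option.ne_none_iff_isSome, imp_iff_not_or] using hnot_free

variable {π : Equiv.Perm (Fin n)} {p : Fin n → Fin n} {S : Finset (Fin n × Fin n)}
  {occ : Fin n → Option (Fin n)} {t : ℕ} {i j k m s : Fin n}

lemma mvpStep_of_eq_none (h : occ s = none) :
    mvpStep occ i s = some (Function.update occ s (some i)) := by
  simp only [mvpStep, h]

lemma mvpStep_of_eq_some (h : occ s = some j)
    (hm : firstFree (Function.update occ s (some i)) s = some m) :
    mvpStep occ i s =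
      some (Function.update (Function.update occ s (some i)) m (some j)) := by
  simp only [mvpStep, h, hm, Option.map_some]

/-- `p` is a preference in which every car prefers its spot in the outcome `π` or the left end of an
inversion ending there, and the inversions so chosen are horizontally separated. These are the
images under `Ψ_{Sub→PF}` of the HS 1-subgraphs. -/
structure IsHSPref (π : Equiv.Perm (Fin n)) (p : Fin n → Fin n) : Prop where
  inversion : ∀ i, p (π i) ≠ i → (p (π i), i) ∈ invFinset π
  isHS : IsHS (pfToSub π p)

/-- The spots where car `π i` can rest at time `t`, that is, when exactly the cars `< t` have
entered: from its preferred spot on, its final spot `i` and the spots `s` whose final occupant `π s`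
is still to come. -/
def restSpots (π : Equiv.Perm (Fin n)) (p : Fin n → Fin n) (t : ℕ) (i : Fin n) : Set (Fin n) :=
  {s | p (π i) ≤ s ∧ (s = i ∨ t ≤ π s)}

/-- The predicted occupancy at time `t`: exactly the cars `< t` are parked, each at its first
resting spot. -/
def IsStateAt (π : Equiv.Perm (Fin n)) (p : Fin n → Fin n) (t : ℕ)
    (occ : Fin n → Option (Fin n)) : Prop :=
  ∀ s i, occ s = some (π i) ↔ (π i : ℕ) < t ∧ IsLeast (restSpots π p t i) s

lemma mem_invFinset : (j, i) ∈ invFinset π ↔ j < i ∧ π i < π j := by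
  simp [invFinset]

lemma mem_pfToSub : (j, i) ∈ pfToSub π p ↔ (j, i) ∈ invFinset π ∧ p (π i) = j := by
  simp [pfToSub]

lemma subToPF_apply_of_mem (hS : IsOneSubgraph π S) (h : (j, i) ∈ S) : subToPF π S (π i) = j := by
  have hex : ∃ j, (j, π.symm (π i)) ∈ S := ⟨j, by simpa using h⟩
  rw [subToPF, dif_pos hex]
  exact hS.2 i _ _ (by simpa using hex.choose_spec) h

lemma subToPF_apply_of_notMem (h : ∀ j, (j, i) ∉ S) : subToPF π S (π i) = i := by
  rw [subToPF, dif_neg (by simpa using h), Equiv.symm_apply_apply]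

lemma mem_of_subToPF_apply_ne (hS : IsOneSubgraph π S) (h : subToPF π S (π i) ≠ i) :
    (subToPF π S (π i), i) ∈ S := by
  obtain ⟨j, hj⟩ : ∃ j, (j, i) ∈ S := by
    contrapose! h
    exact subToPF_apply_of_notMem h
  rwa [subToPF_apply_of_mem hS hj]

lemma pfToSub_subToPF (hS : IsOneSubgraph π S) : pfToSub π (subToPF π S) = S := by
  ext ⟨j, i⟩
  rw [mem_pfToSub]
  constructor
  · rintro ⟨hinv, rfl⟩
    exact mem_of_subToPF_apply_ne hS (mem_invFinset.1 hinv).1.ne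
  · exact fun h => ⟨hS.1 h, subToPF_apply_of_mem hS h⟩

lemma isHSPref_subToPF (hS : IsOneSubgraph π S) (hHS : IsHS S) : IsHSPref π (subToPF π S) where
  inversion _ hi := hS.1 (mem_of_subToPF_apply_ne hS hi)
  isHS := by rwa [pfToSub_subToPF hS]

lemma isParkingFunction_of_apply_perm_le (h : ∀ i, p (π i) ≤ i) : IsParkingFunction p := by
  intro k
  have hsub : (Iic k).map π.toEmbedding ⊆ univ.filter fun c => p c ≤ k := by
    intro c hc
    obtain ⟨i, hi, rfl⟩ := Finset.mem_map.1 hc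
    exact Finset.mem_filter.2 ⟨mem_univ _, (h i).trans (mem_Iic.1 hi)⟩
  simpa using card_le_card hsub

namespace IsHSPref

lemma apply_le (h : IsHSPref π p) (i : Fin n) : p (π i) ≤ i := by
  by_cases hi : p (π i) = i
  · exact hi.le
  · exact (mem_invFinset.1 (h.inversion i hi)).1.le

lemma isParkingFunction (h : IsHSPref π p) : IsParkingFunction p :=
  isParkingFunction_of_apply_perm_le h.apply_le

lemma eq_of_mem_Icc (h : IsHSPref π p) (hi : p (π i) ≠ i) (hj : p (π j) ≠ j)
    (hsi : s ∈ Icc (p (π i)) i) (hsj : s ∈ Icc (p (π j)) j) : i = j := by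
  rw [mem_Icc] at hsi hsj
  by_contra hij
  rcases h.isHS _ (mem_pfToSub.2 ⟨h.inversion i hi, rfl⟩)
    _ (mem_pfToSub.2 ⟨h.inversion j hj, rfl⟩) (fun he => hij (congrArg Prod.snd he))
    with hlt | hlt
  · exact hlt.not_ge (hsj.1.trans hsi.2)
  · exact hlt.not_ge (hsi.1.trans hsj.2)

end IsHSPref

lemma restSpots_succ_of_ne (hik : i ≠ k) :
    restSpots π p (π k + 1) i = restSpots π p (π k) i \ {k} := by
  ext s
  have hsk : (π s : ℕ) = π k ↔ s = k := Fin.val_inj.trans π.apply_eq_iff_eq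
  simp only [restSpots, Set.mem_ofPred_eq, Set.mem_sdiff, Set.mem_singleton_iff]
  grind

lemma self_mem_restSpots (hi : p (π i) ≤ i) (t : ℕ) : i ∈ restSpots π p t i :=
  ⟨hi, Or.inl rfl⟩

lemma exists_isLeast_restSpots (hi : p (π i) ≤ i) (t : ℕ) : ∃ s, IsLeast (restSpots π p t i) s := by
  obtain ⟨s, hs⟩ := exists_minimal_of_wellFoundedLT (· ∈ restSpots π p t i)
    ⟨i, self_mem_restSpots hi t⟩
  exact ⟨s, minimal_iff_isLeast.1 hs⟩

lemma isLeast_restSpots_of_apply_eq (hi : p (π i) = i) (t : ℕ) : IsLeast (restSpots π p t i) i :=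
  ⟨self_mem_restSpots hi.le t, fun _ hs => hi ▸ hs.1⟩

lemma isLeast_restSpots_final (hi : p (π i) ≤ i) : IsLeast (restSpots π p n i) i :=
  ⟨self_mem_restSpots hi n, fun s hs => (hs.2.resolve_right (π s).isLt.not_ge).ge⟩

lemma IsHSPref.isLeast_restSpots_entering (h : IsHSPref π p) (k : Fin n) :
    IsLeast (restSpots π p (π k + 1) k) (p (π k)) := by
  refine ⟨⟨le_rfl, ?_⟩, fun s hs => hs.1⟩
  by_cases hk : p (π k) = k
  · exact Or.inl hk
  · exact Or.inr (mem_invFinset.1 (h.inversion k hk)).2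

namespace IsStateAt

lemma ne_some_entering (hocc : IsStateAt π p (π k) occ) (s : Fin n) : occ s ≠ some (π k) :=
  fun hs => lt_irrefl _ ((hocc s k).1 hs).1

lemma eq_of_mem_restSpots (hocc : IsStateAt π p t occ) (h : IsHSPref π p) (hi : p (π i) ≠ i)
    (hs : s ∈ restSpots π p t i) (hsi : s ≤ i) (hsj : occ s = some (π j)) : j = i := by
  obtain ⟨hjt, hleast⟩ := (hocc s j).1 hsj
  have hs_le : s ≤ j := hleast.2 (self_mem_restSpots (h.apply_le j) t)
  by_cases hj : p (π j) = j
  · obtain rfl : s = j := hs_le.antisymm (hj ▸ hleast.1.1)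
    exact hs.2.resolve_right hjt.not_ge
  · exact h.eq_of_mem_Icc hj hi (mem_Icc.2 ⟨hleast.1.1, hs_le⟩) (mem_Icc.2 ⟨hs.1, hsi⟩)

lemma eq_none_of_entering (hocc : IsStateAt π p (π k) occ) (h : IsHSPref π p)
    (hk : p (π k) ≠ k) (hs : s ∈ restSpots π p (π k) k) (hsk : s ≤ k) : occ s = none := by
  refine Option.eq_none_iff_forall_ne_some.2 (π.surjective.forall.2 fun j hj => ?_)
  obtain rfl := hocc.eq_of_mem_restSpots h hk hs hsk hj
  exact hocc.ne_some_entering s hj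

lemma eq_some_iff_succ_of_ne (hocc : IsStateAt π p (π k) occ) (hik : i ≠ k)
    (hk : occ k ≠ some (π i)) (s : Fin n) :
    occ s = some (π i) ↔ (π i : ℕ) < π k + 1 ∧ IsLeast (restSpots π p (π k + 1) i) s := by
  have hne : (π i : ℕ) ≠ π k := fun he => hik (π.injective (Fin.ext he))
  rw [hocc s i, restSpots_succ_of_ne hik, Nat.lt_succ_iff_lt_or_eq, or_iff_left hne]
  refine and_congr_right fun hlt => (isLeast_sdiff_singleton_iff fun hleast => ?_).symm
  exact hk ((hocc k i).2 ⟨hlt, hleast⟩)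

lemma update_of_eq_none (hocc : IsStateAt π p (π k) occ) (h : IsHSPref π p)
    (hpref : occ (p (π k)) = none) (hk : occ k = none) :
    IsStateAt π p (π k + 1) (Function.update occ (p (π k)) (some (π k))) := by
  intro s i
  by_cases hik : i = k
  · subst hik
    have hne : occ s ≠ some (π i) := hocc.ne_some_entering s
    rw [(h.isLeast_restSpots_entering i).isLeast_iff_eq]
    grind [Function.update_apply]
  · rw [← hocc.eq_some_iff_succ_of_ne hik (by simp [hk])]
    grind [Function.update_apply, π.injective]

lemma lt_of_eq_some (hocc : IsStateAt π p (π k) occ) (hi : p (π i) ≤ i)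
    (hki : occ k = some (π i)) : k < i := by
  have hne : k ≠ i := by
    rintro rfl
    exact hocc.ne_some_entering k hki
  exact (((hocc k i).1 hki).2.2 (self_mem_restSpots hi _)).lt_of_ne hne

lemma eq_some_of_lt_isLeast (hocc : IsStateAt π p (π k) occ) (h : IsHSPref π p)
    (hki : occ k = some (π i)) (hm : IsLeast (restSpots π p (π k + 1) i) m)
    (hks : k < s) (hsm : s < m) : occ s = some (π s) := by
  have hpk : p (π i) ≤ k := ((hocc k i).1 hki).2.1.1
  have hsi : s < i := hsm.trans_le (hm.2 (self_mem_restSpots (h.apply_le i) _))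
  have hentered : (π s : ℕ) < π k := by
    have hnot_rest : s ∉ restSpots π p (π k + 1) i := fun hs => hsm.not_ge (hm.2 hs)
    have hne : (π s : ℕ) ≠ π k := fun he => hks.ne' (π.injective (Fin.ext he))
    have hlt : ¬ (π k + 1 : ℕ) ≤ π s := fun hle => hnot_rest ⟨hpk.trans hks.le, Or.inr hle⟩
    lia
  have hhome : p (π s) = s := by
    by_contra hs
    exact hsi.ne (h.eq_of_mem_Icc hs ((hpk.trans_lt hks).trans hsi).ne
      (mem_Icc.2 ⟨h.apply_le s, le_rfl⟩) (mem_Icc.2 ⟨hpk.trans hks.le, hsi.le⟩))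
  exact (hocc s s).2 ⟨hentered, isLeast_restSpots_of_apply_eq hhome _⟩

lemma lt_and_eq_none_of_isLeast (hocc : IsStateAt π p (π k) occ) (h : IsHSPref π p)
    (hki : occ k = some (π i)) (hm : IsLeast (restSpots π p (π k + 1) i) m) :
    k < m ∧ occ m = none := by
  have hlt := hocc.lt_of_eq_some (h.apply_le i) hki
  have hleast := ((hocc k i).1 hki).2
  obtain ⟨hm_rest, hmk⟩ : m ∈ restSpots π p (π k) i \ {k} :=
    restSpots_succ_of_ne hlt.ne' ▸ hm.1
  refine ⟨(hleast.2 hm_rest).lt_of_ne' hmk, ?_⟩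
  refine Option.eq_none_iff_forall_ne_some.2 (π.surjective.forall.2 fun j hj => ?_)
  obtain rfl := hocc.eq_of_mem_restSpots h (hleast.1.1.trans_lt hlt).ne hm_rest
    (hm.2 (self_mem_restSpots (h.apply_le i) _)) hj
  exact hmk (((hocc m j).1 hj).2.unique hleast)

lemma firstFree_of_bump (hocc : IsStateAt π p (π k) occ) (h : IsHSPref π p)
    (hki : occ k = some (π i)) (hm : IsLeast (restSpots π p (π k + 1) i) m) :
    firstFree (Function.update occ k (some (π k))) k = some m := by
  obtain ⟨hkm, hm_free⟩ := hocc.lt_and_eq_none_of_isLeast h hki hm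
  refine firstFree_eq_some_of_isLeast ⟨⟨hkm.le, ?_⟩, fun s ⟨hks, hs_free⟩ => ?_⟩
  · rw [Function.update_of_ne hkm.ne', hm_free]
  · by_contra! hsm
    obtain rfl | hks := hks.eq_or_lt
    · simp at hs_free
    · rw [Function.update_of_ne hks.ne', hocc.eq_some_of_lt_isLeast h hki hm hks hsm] at hs_free
      exact Option.some_ne_none _ hs_free

lemma update_update_of_bump (hocc : IsStateAt π p (π k) occ) (h : IsHSPref π p)
    (hki : occ k = some (π i)) (hk : p (π k) = k)
    (hm : IsLeast (restSpots π p (π k + 1) i) m) :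
    IsStateAt π p (π k + 1)
      (Function.update (Function.update occ k (some (π k))) m (some (π i))) := by
  intro s j
  obtain ⟨hkm, hm_free⟩ := hocc.lt_and_eq_none_of_isLeast h hki hm
  by_cases hjk : j = k
  · subst hjk
    have hne : occ s ≠ some (π j) := hocc.ne_some_entering s
    have hij : i ≠ j := (hocc.lt_of_eq_some (h.apply_le i) hki).ne'
    rw [(isLeast_restSpots_of_apply_eq hk _).isLeast_iff_eq]
    grind [Function.update_apply, π.injective]
  by_cases hji : j = i
  · subst hji
    have hlt : (π j : ℕ) < π k := ((hocc k j).1 hki).1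
    have honly : occ s = some (π j) → s = k := fun hs =>
      ((hocc s j).1 hs).2.unique ((hocc k j).1 hki).2
    rw [hm.isLeast_iff_eq]
    grind [Function.update_apply, π.injective]
  · have hne : π j ≠ π i := π.injective.ne hji
    rw [← hocc.eq_some_iff_succ_of_ne hjk (by simp [hki, hne.symm])]
    grind [Function.update_apply, π.injective]

lemma exists_mvpStep (hocc : IsStateAt π p (π k) occ) (h : IsHSPref π p) :
    ∃ occ', mvpStep occ (π k) (p (π k)) = some occ' ∧ IsStateAt π p (π k + 1) occ' := by
  by_cases hk : p (π k) = k
  · rcases hocck : occ k with _ | c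
    · have hpref : occ (p (π k)) = none := by rwa [hk]
      exact ⟨_, mvpStep_of_eq_none hpref, hocc.update_of_eq_none h hpref hocck⟩
    · obtain ⟨i, rfl⟩ := π.surjective c
      obtain ⟨m, hm⟩ := exists_isLeast_restSpots (h.apply_le i) (π k + 1)
      rw [hk]
      exact ⟨_, mvpStep_of_eq_some hocck (hocc.firstFree_of_bump h hocck hm),
        hocc.update_update_of_bump h hocck hk hm⟩
  · have hpref : occ (p (π k)) = none := hocc.eq_none_of_entering h hk
      ⟨le_rfl, Or.inr (mem_invFinset.1 (h.inversion k hk)).2.le⟩ (h.apply_le k)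
    have hocck : occ k = none :=
      hocc.eq_none_of_entering h hk (self_mem_restSpots (h.apply_le k) _) le_rfl
    exact ⟨_, mvpStep_of_eq_none hpref, hocc.update_of_eq_none h hpref hocck⟩

end IsStateAt

theorem IsHSPref.mvpOutcome (h : IsHSPref π p) : MVPOutcome p π := by
  obtain ⟨occ, hrun, hocc⟩ := exists_foldlM_finRange_eq_some
    (f := fun occ c => mvpStep occ c (p c)) (a := fun _ => none) (IsStateAt π p)
    (fun s i => by simp)
    (fun c occ hocc => by
      obtain ⟨k, rfl⟩ := π.surjective c
      exact hocc.exists_mvpStep h)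
  exact ⟨occ, hrun, fun i => (hocc i i).2 ⟨(π i).isLt, isLeast_restSpots_final (h.apply_le i)⟩⟩

/-- every horizontally separated 1-subgraph is valid; consequently
`|Fib_n(π)|` is at least the number of HS 1-subgraphs. -/
theorem statement6 (n : ℕ) (π : Equiv.Perm (Fin n)) :
    (∀ S : Finset (Fin n × Fin n), IsOneSubgraph π S → IsHS S → IsValid π S) ∧
    {S : Finset (Fin n × Fin n) | IsOneSubgraph π S ∧ IsHS S}.ncard ≤
      (FibMVP π).ncard := by
  have hvalid (S) (hS : IsOneSubgraph π S) (hHS : IsHS S) : IsValid π S :=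
    (isHSPref_subToPF hS hHS).mvpOutcome
  have hmaps (S) (hS : IsOneSubgraph π S ∧ IsHS S) : subToPF π S ∈ FibMVP π :=
    ⟨(isHSPref_subToPF hS.1 hS.2).isParkingFunction, hvalid S hS.1 hS.2⟩
  have hleft : Set.LeftInvOn (pfToSub π) (subToPF π) {S | IsOneSubgraph π S ∧ IsHS S} :=
    fun S hS => pfToSub_subToPF hS.1
  exact ⟨hvalid, Set.ncard_le_ncard_of_injOn _ hmaps hleft.injOn⟩

end MVPPaper
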